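/- (Theorem 3.1) The position vector of M satisfies Δ^{III} x = 0 on U if and only if M is minimal, i.e. the mean curvature H vanishes identically on U. -/

import Mathlib

open Matrix

noncomputable section

/-- The parameter domain `ℝ²`. -/
abbrev Param : Type := Fin 2 → ℝ

/-- Vectors in Euclidean 3-space. -/
abbrev Vec3 : Type := Fin 3 → ℝ

/-- Partial derivative of a vector-valued function in the `i`-th coordinate direction. -/
noncomputable def pd (i : Fin 2) (f : Param → Vec3) (u : Param) : Vec3 :=
  fderiv ℝ f u (Pi.single i 1)

/-- Partial derivative of a scalar function in the `i`-th coordinate direction. -/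
noncomputable def pds (i : Fin 2) (f : Param → ℝ) (u : Param) : ℝ :=
  fderiv ℝ f u (Pi.single i 1)

/-- The Euclidean inner product on `ℝ³`. -/
def dot3 (a b : Vec3) : ℝ := ∑ k, a k * b k

/-- The Euclidean norm on `ℝ³`. -/
noncomputable def norm3 (a : Vec3) : ℝ := Real.sqrt (dot3 a a)

/-- The Gauss map `n = (x_{/1} × x_{/2}) / ‖x_{/1} × x_{/2}‖`. -/
noncomputable def gaussMap (x : Param → Vec3) (u : Param) : Vec3 :=
  (norm3 (crossProduct (pd 0 x u) (pd 1 x u)))⁻¹ • crossProduct (pd 0 x u) (pd 1 x u)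

/-- Components `g_{ij}` of the first fundamental form. -/
noncomputable def fformI (x : Param → Vec3) (u : Param) : Matrix (Fin 2) (Fin 2) ℝ :=
  Matrix.of fun i j => dot3 (pd i x u) (pd j x u)

/-- Components `b_{ij} = ⟨∂²x/∂u^i∂u^j, n⟩` of the second fundamental form. -/
noncomputable def fformII (x : Param → Vec3) (u : Param) : Matrix (Fin 2) (Fin 2) ℝ :=
  Matrix.of fun i j => dot3 (pd i (pd j x) u) (gaussMap x u)

/-- Components `e_{ij} = ⟨n_{/i}, n_{/j}⟩` of the third fundamental form. -/
noncomputable def fformIII (x : Param → Vec3) (u : Param) : Matrix (Fin 2) (Fin 2) ℝ :=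
  Matrix.of fun i j => dot3 (pd i (gaussMap x) u) (pd j (gaussMap x) u)

/-- The Gauss curvature `K = det(b_{ij}) / det(g_{ij})`. -/
noncomputable def gaussCurv (x : Param → Vec3) (u : Param) : ℝ :=
  (fformII x u).det / (fformI x u).det

/-- The mean curvature `H = (1/2) g^{ij} b_{ij}`. -/
noncomputable def meanCurv (x : Param → Vec3) (u : Param) : ℝ :=
  (1 / 2) * ∑ i, ∑ j, (fformI x u)⁻¹ i j * fformII x u i j

/-- First Beltrami operator `∇^J(φ, ψ) = a^{ij} φ_{/i} ψ_{/j}` with respect to the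
fundamental form with component matrix `a`, for scalar `φ` and `ℝ³`-valued `ψ`. -/
noncomputable def beltrami1 (a : Param → Matrix (Fin 2) (Fin 2) ℝ)
    (φ : Param → ℝ) (ψ : Param → Vec3) (u : Param) : Vec3 :=
  ∑ i, ∑ j, ((a u)⁻¹ i j * pds i φ u) • pd j ψ u

/-- Second Beltrami operator
`Δ^J f = −(1/√|det a|) ∂_i (√|det a| a^{ij} ∂_j f)` with respect to the fundamental
form with component matrix `a`, acting componentwise on `ℝ³`-valued functions. -/
noncomputable def beltrami2 (a : Param → Matrix (Fin 2) (Fin 2) ℝ)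
    (f : Param → Vec3) (u : Param) : Vec3 :=
  -((Real.sqrt |(a u).det|)⁻¹ •
    ∑ i, ∑ j, pd i (fun v => (Real.sqrt |(a v).det| * (a v)⁻¹ i j) • pd j f v) u)

/-- `x` is an immersion on `U`: the partial derivatives are linearly independent. -/
def Immersed (x : Param → Vec3) (U : Set Param) : Prop :=
  ∀ u ∈ U, LinearIndependent ℝ ![pd 0 x u, pd 1 x u]

/-- `f` is nonconstant on `U`. -/
def NonconstOn (f : Param → Vec3) (U : Set Param) : Prop :=
  ¬ ∃ v : Vec3, ∀ u ∈ U, f u = v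

lemma dot3_add_left (a b c : Vec3) : dot3 (a + b) c = dot3 a c + dot3 b c := by
  simp [dot3, Fin.sum_univ_three]; ring
lemma dot3_add_right (a b c : Vec3) : dot3 c (a + b) = dot3 c a + dot3 c b := by
  simp [dot3, Fin.sum_univ_three]; ring
lemma dot3_smul_left (r : ℝ) (b c : Vec3) : dot3 (r • b) c = r * dot3 b c := by
  simp [dot3, Fin.sum_univ_three]; ring
lemma dot3_smul_right (r : ℝ) (b c : Vec3) : dot3 c (r • b) = r * dot3 c b := by
  simp [dot3, Fin.sum_univ_three]; ring
lemma dot3_comm (b c : Vec3) : dot3 c b = dot3 b c := by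
  simp [dot3, Fin.sum_univ_three]; ring

lemma dot3_self_pos {c : Vec3} (h : c ≠ 0) : 0 < dot3 c c := by
  have h0 : 0 ≤ dot3 c c := Finset.sum_nonneg fun k _ => mul_self_nonneg _
  rcases h0.lt_or_eq with h1 | h1
  · exact h1
  · exfalso; apply h
    have := (Finset.sum_eq_zero_iff_of_nonneg (fun k _ => mul_self_nonneg (c k))).1 h1.symm
    ext k
    simpa using this k (Finset.mem_univ _)

lemma tangent_decomp (X Y N : Vec3) (hc : dot3 (crossProduct X Y) (crossProduct X Y) ≠ 0)
    (hN : dot3 N (crossProduct X Y) = 0) : ∃ a b : ℝ, N = a • X + b • Y := by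
  set D := dot3 (crossProduct X Y) (crossProduct X Y) with hD
  refine ⟨(dot3 N X * dot3 Y Y - dot3 N Y * dot3 X Y) / D,
    (dot3 N Y * dot3 X X - dot3 N X * dot3 X Y) / D, ?_⟩
  have key : D • N = (dot3 N X * dot3 Y Y - dot3 N Y * dot3 X Y) • X +
      (dot3 N Y * dot3 X X - dot3 N X * dot3 X Y) • Y + dot3 N (crossProduct X Y) • crossProduct X Y := by
    rw [hD]
    ext k
    fin_cases k <;> simp [dot3, Fin.sum_univ_three, cross_apply] <;> ring
  rw [hN, zero_smul, add_zero] at key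
  have : N = D⁻¹ • (D • N) := by rw [smul_smul, inv_mul_cancel₀ hc, one_smul]
  refine this.trans ?_
  rw [key, smul_add, smul_smul, smul_smul]
  congr 2 <;> ring

lemma cross_dot_self (X Y : Vec3) : dot3 (crossProduct X Y) (crossProduct X Y) =
    dot3 X X * dot3 Y Y - dot3 X Y * dot3 X Y := by
  simp [dot3, Fin.sum_univ_three, cross_apply]; ring

def dotL : Vec3 →L[ℝ] Vec3 →L[ℝ] ℝ :=
  (LinearMap.mk₂ ℝ dot3 (fun a b c => dot3_add_left a b c) (fun r a b => dot3_smul_left r a b)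
    (fun a b c => dot3_add_right b c a) (fun r a b => dot3_smul_right r b a)).toContinuousBilinearMap

def crossL : Vec3 →L[ℝ] Vec3 →L[ℝ] Vec3 :=
  (crossProduct : Vec3 →ₗ[ℝ] Vec3 →ₗ[ℝ] Vec3).toContinuousBilinearMap

lemma dotL_apply (a b : Vec3) : dotL a b = dot3 a b := rfl
lemma crossL_apply (a b : Vec3) : crossL a b = crossProduct a b := rfl

lemma pd_cross (i : Fin 2) {f g : Param → Vec3} {u : Param} (hf : DifferentiableAt ℝ f u)
    (hg : DifferentiableAt ℝ g u) :
    pd i (fun v => crossProduct (f v) (g v)) u =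
      crossProduct (pd i f u) (g u) + crossProduct (f u) (pd i g u) := by
  have := crossL.fderiv_of_bilinear hf hg
  simp only [crossL_apply] at this
  unfold pd
  rw [this]
  simp [crossL_apply, add_comm]

lemma pds_dot (i : Fin 2) {f g : Param → Vec3} {u : Param} (hf : DifferentiableAt ℝ f u)
    (hg : DifferentiableAt ℝ g u) :
    pds i (fun v => dot3 (f v) (g v)) u = dot3 (pd i f u) (g u) + dot3 (f u) (pd i g u) := by
  have := dotL.fderiv_of_bilinear hf hg
  simp only [dotL_apply] at this
  unfold pd pds
  rw [this]
  simp [dotL_apply, add_comm]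

open scoped ContDiff

lemma cd_dot {f g : Param → Vec3} {u : Param} (hf : ContDiffAt ℝ ∞ f u)
    (hg : ContDiffAt ℝ ∞ g u) : ContDiffAt ℝ ∞ (fun v => dot3 (f v) (g v)) u := 
  (dotL.contDiff.contDiffAt.comp u hf).clm_apply hg

lemma cd_cross {f g : Param → Vec3} {u : Param} (hf : ContDiffAt ℝ ∞ f u)
    (hg : ContDiffAt ℝ ∞ g u) : ContDiffAt ℝ ∞ (fun v => crossProduct (f v) (g v)) u := 
  (crossL.contDiff.contDiffAt.comp u hf).clm_apply hg

lemma cd_pd (i : Fin 2) {f : Param → Vec3} {u : Param} (hf : ContDiffAt ℝ ∞ f u) :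
    ContDiffAt ℝ ∞ (pd i f) u :=
  (hf.fderiv_right (m := ∞) (by simp)).clm_apply contDiffAt_const

lemma cd_diff {F : Type*} [NormedAddCommGroup F] [NormedSpace ℝ F] {f : Param → F} {u : Param}
    (hf : ContDiffAt ℝ ∞ f u) : DifferentiableAt ℝ f u :=
  hf.differentiableAt (by simp)

lemma pd_comm (i j : Fin 2) {f : Param → Vec3} {u : Param} (hf : ContDiffAt ℝ ∞ f u) :
    pd i (pd j f) u = pd j (pd i f) u := by
  have hs : IsSymmSndFDerivAt ℝ f u := hf.isSymmSndFDerivAt (by simp; exact WithTop.coe_le_coe.2 le_top)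
  have hd : DifferentiableAt ℝ (fderiv ℝ f) u := cd_diff (hf.fderiv_right (m := ∞) (by simp))
  have h (i j : Fin 2) : pd i (pd j f) u = fderiv ℝ (fderiv ℝ f) u (Pi.single i 1) (Pi.single j 1) := by
    unfold pd
    rw [fderiv_clm_apply hd (differentiableAt_const _)]
    simp
  rw [h, h]; exact hs _ _

lemma pds_congr (i : Fin 2) {f g : Param → ℝ} {u : Param} (h : f =ᶠ[nhds u] g) :
    pds i f u = pds i g u := by unfold pds; rw [h.fderiv_eq]
lemma pd_congr (i : Fin 2) {f g : Param → Vec3} {u : Param} (h : f =ᶠ[nhds u] g) :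
    pd i f u = pd i g u := by unfold pd; rw [h.fderiv_eq]
lemma pds_const (i : Fin 2) (c : ℝ) (u : Param) : pds i (fun _ => c) u = 0 := by
  simp [pds]

lemma inv00 (M : Matrix (Fin 2) (Fin 2) ℝ) : M⁻¹ 0 0 = (M.det)⁻¹ * M 1 1 := by
  simp [Matrix.inv_def, Matrix.adjugate_fin_two]
lemma inv01 (M : Matrix (Fin 2) (Fin 2) ℝ) : M⁻¹ 0 1 = (M.det)⁻¹ * -M 0 1 := by
  simp [Matrix.inv_def, Matrix.adjugate_fin_two]
lemma inv10 (M : Matrix (Fin 2) (Fin 2) ℝ) : M⁻¹ 1 0 = (M.det)⁻¹ * -M 1 0 := by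
  simp [Matrix.inv_def, Matrix.adjugate_fin_two]
lemma inv11 (M : Matrix (Fin 2) (Fin 2) ℝ) : M⁻¹ 1 1 = (M.det)⁻¹ * M 0 0 := by
  simp [Matrix.inv_def, Matrix.adjugate_fin_two]

/-- pointwise data -/
structure Pt (x : Param → Vec3) (u : Param) : Prop where
  sx : ContDiffAt ℝ ∞ x u
  sn : ContDiffAt ℝ ∞ (gaussMap x) u
  cpos : 0 < dot3 (crossProduct (pd 0 x u) (pd 1 x u)) (crossProduct (pd 0 x u) (pd 1 x u))
  nX : ∀ i, dot3 (pd i x u) (gaussMap x u) = 0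
  nn : dot3 (gaussMap x u) (gaussMap x u) = 1

lemma mkPt {x : Param → Vec3} {u : Param} (hx : ContDiffAt ℝ ∞ x u)
    (hi : LinearIndependent ℝ ![pd 0 x u, pd 1 x u]) : Pt x u := by
  have hc : crossProduct (pd 0 x u) (pd 1 x u) ≠ 0 :=
    crossProduct_ne_zero_iff_linearIndependent.2 hi
  have cpos := dot3_self_pos hc
  have sc := cd_cross (cd_pd 0 hx) (cd_pd 1 hx)
  refine ⟨hx, ?_, cpos, ?_, ?_⟩
  · unfold gaussMap norm3
    exact (((cd_dot sc sc).sqrt cpos.ne').inv (Real.sqrt_pos.2 cpos).ne').smul sc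
  · intro i
    unfold gaussMap
    rw [dot3_smul_right]
    apply mul_eq_zero_of_right
    fin_cases i <;> simp [dot3, Fin.sum_univ_three, cross_apply] <;> ring
  · unfold gaussMap norm3
    rw [dot3_smul_left, dot3_smul_right, ← mul_assoc, ← mul_inv, Real.mul_self_sqrt cpos.le,
      inv_mul_cancel₀ cpos.ne']

lemma dotNX {x : Param → Vec3} {u : Param} (h : ∀ᶠ v in nhds u, Pt x v) (i j : Fin 2) :
    dot3 (pd i (gaussMap x) u) (pd j x u) = - fformII x u i j := by
  have hu := h.self_of_nhds
  have h1 := pds_dot i (cd_diff (cd_pd j hu.sx)) (cd_diff hu.sn)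
  rw [pds_congr i (g := fun _ => 0) (h.mono fun v hv => hv.nX j), pds_const] at h1
  simp only [fformII, Matrix.of_apply]
  rw [dot3_comm]; linarith

lemma dotNn {x : Param → Vec3} {u : Param} (h : ∀ᶠ v in nhds u, Pt x v) (i : Fin 2) :
    dot3 (pd i (gaussMap x) u) (gaussMap x u) = 0 := by
  have hu := h.self_of_nhds
  have h1 := pds_dot i (cd_diff hu.sn) (cd_diff hu.sn)
  rw [pds_congr i (g := fun _ => 1) (h.mono fun v hv => hv.nn), pds_const,
    dot3_comm (pd i (gaussMap x) u)] at h1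
  linarith

/-- Weingarten in scalar form. -/
lemma weingarten {x : Param → Vec3} {u : Param} (h : ∀ᶠ v in nhds u, Pt x v)
    (i : Fin 2) : ∃ a b : ℝ, pd i (gaussMap x) u = a • pd 0 x u + b • pd 1 x u := by
  have hu := h.self_of_nhds
  apply tangent_decomp _ _ _ hu.cpos.ne'
  have h1 := dotNn h i
  unfold gaussMap norm3 at h1
  rw [dot3_smul_right] at h1
  rcases mul_eq_zero.1 h1 with h2 | h2
  · exact absurd h2 (inv_ne_zero (Real.sqrt_pos.2 hu.cpos).ne')
  · exact h2

/-- All scalar relations. -/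
lemma scal {x : Param → Vec3} {u : Param} (h : ∀ᶠ v in nhds u, Pt x v)
    (hp : (fformII x u).det ≠ 0) : ∃ a c a' c' p q r : ℝ,
    pd 0 (gaussMap x) u = a • pd 0 x u + c • pd 1 x u ∧
    pd 1 (gaussMap x) u = a' • pd 0 x u + c' • pd 1 x u ∧
    fformI x u = !![p, q; q, r] ∧ 0 < p ∧
    dot3 (crossProduct (pd 0 x u) (pd 1 x u)) (crossProduct (pd 0 x u) (pd 1 x u)) = p * r - q * q ∧
    0 < p * r - q * q ∧
    fformII x u = !![-(a*p+c*q), -(a*q+c*r); -(a*q+c*r), -(a'*q+c'*r)] ∧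
    a*q+c*r = a'*p+c'*q ∧ a * c' - c * a' ≠ 0 ∧
    fformIII x u = !![a*a*p+2*a*c*q+c*c*r, a*a'*p+(a*c'+c*a')*q+c*c'*r;
      a*a'*p+(a*c'+c*a')*q+c*c'*r, a'*a'*p+2*a'*c'*q+c'*c'*r] := by
  have hu := h.self_of_nhds
  obtain ⟨a, c, h0⟩ := weingarten h 0
  obtain ⟨a', c', h1⟩ := weingarten h 1
  have hcd := cross_dot_self (pd 0 x u) (pd 1 x u)
  have hcp := hu.cpos
  have e00 := dotNX h 0 0
  have e01 := dotNX h 0 1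
  have e10 := dotNX h 1 0
  have e11 := dotNX h 1 1
  have hsym : fformII x u 0 1 = fformII x u 1 0 := by
    simp only [fformII, Matrix.of_apply]; rw [pd_comm 0 1 hu.sx]
  have hp0 : 0 ≤ dot3 (pd 0 x u) (pd 0 x u) := Finset.sum_nonneg fun k _ => mul_self_nonneg _
  have hIII : ∀ i j, fformIII x u i j = dot3 (pd i (gaussMap x) u) (pd j (gaussMap x) u) :=
    fun i j => rfl
  have t00 := hIII 0 0
  have t01 := hIII 0 1
  have t10 := hIII 1 0
  have t11 := hIII 1 1
  have hI : fformI x u = !![dot3 (pd 0 x u) (pd 0 x u), dot3 (pd 0 x u) (pd 1 x u);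
      dot3 (pd 0 x u) (pd 1 x u), dot3 (pd 1 x u) (pd 1 x u)] := by
    ext i j
    fin_cases i <;> fin_cases j <;> simp [fformI]
    exact dot3_comm _ _
  simp only [h0, h1, dot3_add_left, dot3_add_right, dot3_smul_left, dot3_smul_right,
    dot3_comm (pd 0 x u) (pd 1 x u)] at e00 e01 e10 e11 t00 t01 t10 t11
  generalize dot3 (pd 0 x u) (pd 0 x u) = p at *
  generalize dot3 (pd 0 x u) (pd 1 x u) = q at *
  generalize dot3 (pd 1 x u) (pd 1 x u) = r at *
  rw [hcd] at hcp
  rw [Matrix.det_fin_two] at hp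
  have b00 : fformII x u 0 0 = -(a*p+c*q) := by linarith
  have b01 : fformII x u 0 1 = -(a*q+c*r) := by linarith
  have b10 : fformII x u 1 0 = -(a*q+c*r) := by linarith
  have b11 : fformII x u 1 1 = -(a'*q+c'*r) := by linarith
  have hs : a*q+c*r = a'*p+c'*q := by linarith
  refine ⟨a, c, a', c', p, q, r, h0, h1, hI, ?_, hcd, hcp, ?_, hs, ?_, ?_⟩
  · rcases hp0.lt_or_eq with h | h
    · exact h
    · rw [← h] at hcp; nlinarith [mul_self_nonneg q]
  · ext i j
    fin_cases i <;> fin_cases j <;> simp <;> linarith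
  · intro hz
    apply hp
    rw [b00, b01, b10, b11]
    have : (a*q+c*r) * (a*q+c*r) = (a*q+c*r) * (a'*p+c'*q) := by rw [← hs]
    linear_combination (p*r-q*q) * hz - this
  · ext i j
    fin_cases i <;> fin_cases j <;> simp
    · rw [t00]; ring
    · rw [t01]; ring
    · rw [t10]; ring
    · rw [t11]; ring

lemma detIII {x : Param → Vec3} {u : Param} (h : ∀ᶠ v in nhds u, Pt x v)
    (hp : (fformII x u).det ≠ 0) : 0 < (fformIII x u).det := by
  obtain ⟨a, c, a', c', p, q, r, h0, h1, hI, hp0, hcd, hD, hII, hs, hA, hIII⟩ := scal h hp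
  rw [hIII, Matrix.det_fin_two_of]
  have : 0 < (a * c' - c * a')^2 * (p*r-q*q) := by positivity
  nlinarith [this]

lemma diffIII {x : Param → Vec3} {u : Param} (h : ∀ᶠ v in nhds u, Pt x v)
    (hp : (fformII x u).det ≠ 0) (i j : Fin 2) :
    DifferentiableAt ℝ (fun v => (Real.sqrt |(fformIII x v).det| * (fformIII x v)⁻¹ i j) • pd j x v) u := by
  have hu := h.self_of_nhds
  have hE (i j : Fin 2) : DifferentiableAt ℝ (fun v => fformIII x v i j) u :=
    cd_diff (cd_dot (cd_pd i hu.sn) (cd_pd j hu.sn))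
  have hdet : DifferentiableAt ℝ (fun v => (fformIII x v).det) u := by
    simp only [Matrix.det_fin_two]
    exact ((hE 0 0).mul (hE 1 1)).sub ((hE 0 1).mul (hE 1 0))
  have hd := detIII h hp
  have hinv : DifferentiableAt ℝ (fun v => (fformIII x v)⁻¹ i j) u := by
    fin_cases i <;> fin_cases j <;> simp only [Fin.zero_eta, Fin.mk_one, inv00, inv01, inv10, inv11]
    · exact (hdet.inv hd.ne').mul (hE _ _)
    · exact (hdet.inv hd.ne').mul (hE _ _).neg
    · exact (hdet.inv hd.ne').mul (hE _ _).neg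
    · exact (hdet.inv hd.ne').mul (hE _ _)
  have habs : DifferentiableAt ℝ (fun v => |(fformIII x v).det|) u := hdet.abs hd.ne'
  exact ((habs.sqrt (abs_pos.2 hd.ne').ne').mul hinv).smul (cd_diff (cd_pd j hu.sx))

lemma meanCurv_eq {x : Param → Vec3} {u : Param} {a c a' c' p q r : ℝ}
    (hI : fformI x u = !![p, q; q, r]) (hD : 0 < p * r - q * q)
    (hII : fformII x u = !![-(a*p+c*q), -(a*q+c*r); -(a*q+c*r), -(a'*q+c'*r)])
    (hs : a*q+c*r = a'*p+c'*q) : meanCurv x u = -(1/2) * (a + c') := by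
  unfold meanCurv
  simp only [Fin.sum_univ_two, inv00, inv01, inv10, inv11, hI, hII, Matrix.det_fin_two_of]
  have hd : (p*r-q*q)⁻¹ * (p*r-q*q) = 1 := inv_mul_cancel₀ hD.ne'
  generalize (p*r-q*q)⁻¹ = d at *
  simp
  linear_combination (1/2) * d * q * hs - (1/2) * (a+c') * hd

lemma fwd {x : Param → Vec3} {u : Param} (h : ∀ᶠ v in nhds u, Pt x v)
    (hp : (fformII x u).det ≠ 0) (hB : beltrami2 (fformIII x) x u = 0) : meanCurv x u = 0 := by
  have hu := h.self_of_nhds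
  have hd := detIII h hp
  have hs0 : 0 < Real.sqrt |(fformIII x u).det| := Real.sqrt_pos.2 (abs_pos.2 hd.ne')
  have key (i j : Fin 2) : dot3 (pd i (fun v => (Real.sqrt |(fformIII x v).det| *
      (fformIII x v)⁻¹ i j) • pd j x v) u) (gaussMap x u) =
      Real.sqrt |(fformIII x u).det| * ((fformIII x u)⁻¹ i j * fformII x u i j) := by
    have h1 := pds_dot i (diffIII h hp i j) (cd_diff hu.sn)
    rw [pds_congr i (g := fun _ => 0) (h.mono fun v hv => by
      simp only [dot3_smul_left, hv.nX j, mul_zero]), pds_const, dot3_smul_left,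
      dot3_comm (pd i (gaussMap x) u), dotNX h] at h1
    linarith
  unfold beltrami2 at hB
  rw [neg_eq_zero, smul_eq_zero] at hB
  have hB := hB.resolve_left (inv_ne_zero hs0.ne')
  have hB2 := congrArg (fun w => dot3 w (gaussMap x u)) hB
  simp only [Fin.sum_univ_two, dot3_add_left, key] at hB2
  rw [show dot3 0 (gaussMap x u) = 0 by simp [dot3]] at hB2
  rw [← mul_add, ← mul_add, ← mul_add] at hB2
  have hB3 := (mul_eq_zero.1 hB2).resolve_left hs0.ne'
  obtain ⟨a, c, a', c', p, q, r, h0, h1, hI, hp0, hcd, hD, hII, hs, hA, hIII⟩ := scal h hp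
  rw [meanCurv_eq hI hD hII hs]
  simp only [inv00, inv01, inv10, inv11] at hB3
  have hB4 : (fformIII x u 1 1 * fformII x u 0 0 - fformIII x u 0 1 * fformII x u 0 1)
    + (- fformIII x u 1 0 * fformII x u 1 0 + fformIII x u 0 0 * fformII x u 1 1) = 0 := by
    have hne := hd.ne'
    apply (mul_eq_zero.1 _).resolve_left (inv_ne_zero hne)
    linear_combination hB3
  rw [hIII, hII] at hB4
  simp at hB4
  have : (a + c') * ((a * c' - c * a') * (p*r-q*q)) = 0 := by
    linear_combination -hB4 + (a*a'*p+(a*c'+c*a')*q+c*c'*r) * hs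
  rcases mul_eq_zero.1 this with h | h
  · rw [h]; simp
  · exact absurd h (mul_ne_zero hA hD.ne')

/-- in the minimal case the coefficients agree with those of the first form -/
lemma coeff {x : Param → Vec3} {u : Param} (h : ∀ᶠ v in nhds u, Pt x v)
    (hp : (fformII x u).det ≠ 0) (hH : meanCurv x u = 0) (i j : Fin 2) :
    Real.sqrt |(fformIII x u).det| * (fformIII x u)⁻¹ i j =
      norm3 (crossProduct (pd 0 x u) (pd 1 x u)) * (fformI x u)⁻¹ i j := by
  have hd := detIII h hp
  have hpos : 0 ≤ fformIII x u 0 0 := by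
    change 0 ≤ dot3 _ _
    exact Finset.sum_nonneg fun k _ => mul_self_nonneg _
  obtain ⟨a, c, a', c', p, q, r, h0, h1, hI, hp0, hcd, hD, hII, hs, hA, hIII⟩ := scal h hp
  rw [meanCurv_eq hI hD hII hs] at hH
  obtain rfl : c' = -a := by linarith
  have hE : fformIII x u = (a*a+c*a') • fformI x u := by
    rw [hIII, hI]
    ext i j
    fin_cases i <;> fin_cases j <;> simp
    · linear_combination c * hs
    · linear_combination (-a) * hs
    · linear_combination (-a) * hs
    · linear_combination (-a') * hs
  have hl : 0 < a*a+c*a' := by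
    rw [hE, hI] at hpos
    simp at hpos
    have h1 : 0 ≤ a*a+c*a' := nonneg_of_mul_nonneg_left hpos hp0
    refine lt_of_le_of_ne h1 fun h => hA ?_
    linarith
  generalize a*a+c*a' = l at *
  have hdI : (fformI x u).det = p * r - q * q := by rw [hI, Matrix.det_fin_two_of]
  have hsq : Real.sqrt |(fformIII x u).det| = l * norm3 (crossProduct (pd 0 x u) (pd 1 x u)) := by
    unfold norm3
    rw [hE, Matrix.det_smul, hcd, hdI, Fintype.card_fin, abs_of_pos (by positivity),
      Real.sqrt_mul (by positivity), Real.sqrt_sq hl.le]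
  have hinv : (fformIII x u)⁻¹ = l⁻¹ • (fformI x u)⁻¹ := by
    rw [hE]
    apply Matrix.inv_eq_left_inv
    rw [Matrix.smul_mul, Matrix.mul_smul, smul_smul, inv_mul_cancel₀ hl.ne', one_smul]
    exact Matrix.nonsing_inv_mul _ (by rw [hdI]; exact hD.ne'.isUnit)
  rw [hsq, hinv, Matrix.smul_apply, smul_eq_mul]
  field_simp

lemma crossV {x : Param → Vec3} {u : Param} (hu : Pt x u) :
    (∑ j, (norm3 (crossProduct (pd 0 x u) (pd 1 x u)) * (fformI x u)⁻¹ 0 j) • pd j x u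
      = crossProduct (pd 1 x u) (gaussMap x u)) ∧
    (∑ j, (norm3 (crossProduct (pd 0 x u) (pd 1 x u)) * (fformI x u)⁻¹ 1 j) • pd j x u
      = crossProduct (gaussMap x u) (pd 0 x u)) := by
  have hc := hu.cpos
  have hn : 0 < norm3 (crossProduct (pd 0 x u) (pd 1 x u)) := Real.sqrt_pos.2 hc
  have hn2 : norm3 (crossProduct (pd 0 x u) (pd 1 x u)) * norm3 (crossProduct (pd 0 x u) (pd 1 x u))
     = (fformI x u).det := by
    unfold norm3
    rw [Real.mul_self_sqrt hc.le, cross_dot_self, Matrix.det_fin_two]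
    simp [fformI]; left; exact dot3_comm _ _
  unfold gaussMap
  simp only [Fin.sum_univ_two, inv00, inv01, inv10, inv11, ← hn2]
  generalize norm3 (crossProduct (pd 0 x u) (pd 1 x u)) = w at *
  simp only [fformI, Matrix.of_apply]
  generalize pd 0 x u = X at *
  generalize pd 1 x u = Y at *
  have e (t : ℝ) : w * ((w * w)⁻¹ * t) = w⁻¹ * t := by field_simp
  simp only [e]
  constructor
  · ext k
    fin_cases k <;> simp [dot3, Fin.sum_univ_three, cross_apply] <;> ring
  · ext k
    fin_cases k <;> simp [dot3, Fin.sum_univ_three, cross_apply] <;> ring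

lemma bwd {x : Param → Vec3} {u : Param}
    (h : ∀ᶠ v in nhds u, (∀ᶠ w in nhds v, Pt x w) ∧ (fformII x v).det ≠ 0 ∧ meanCurv x v = 0) :
    beltrami2 (fformIII x) x u = 0 := by
  obtain ⟨hP, hp, hH⟩ := h.self_of_nhds
  have hu := hP.self_of_nhds
  have hsum (i : Fin 2) : ∑ j, pd i (fun v => (Real.sqrt |(fformIII x v).det| *
      (fformIII x v)⁻¹ i j) • pd j x v) u = pd i (fun v => ∑ j, (Real.sqrt |(fformIII x v).det| *
      (fformIII x v)⁻¹ i j) • pd j x v) u := by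
    have hh := fderiv_fun_sum (u := Finset.univ) (fun j _ => diffIII hP hp i j)
    have hh2 := congrArg (fun L => L (Pi.single i 1)) hh
    simp only [ContinuousLinearMap.sum_apply] at hh2
    exact hh2.symm
  unfold beltrami2
  rw [neg_eq_zero]
  apply smul_eq_zero_of_right
  have sX0 := cd_diff (cd_pd 0 hu.sx)
  have sX1 := cd_diff (cd_pd 1 hu.sx)
  have sn := cd_diff hu.sn
  rw [Fin.sum_univ_two, hsum, hsum,
    pd_congr 0 (g := fun v => crossProduct (pd 1 x v) (gaussMap x v)) (h.mono fun v hv => by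
      simp only [coeff hv.1 hv.2.1 hv.2.2]; exact (crossV hv.1.self_of_nhds).1),
    pd_congr 1 (g := fun v => crossProduct (gaussMap x v) (pd 0 x v)) (h.mono fun v hv => by
      simp only [coeff hv.1 hv.2.1 hv.2.2]; exact (crossV hv.1.self_of_nhds).2),
    pd_cross 0 sX1 sn, pd_cross 1 sn sX0, pd_comm 1 0 hu.sx]
  obtain ⟨a, c, a', c', p, q, r, h0, h1, hI, hp0, hcd, hD, hII, hs, hA, hIII⟩ := scal hP hp
  rw [meanCurv_eq hI hD hII hs] at hH
  obtain rfl : c' = -a := by linarith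
  rw [h0, h1]
  ext k
  fin_cases k <;> simp [cross_apply] <;> ring

/-- Theorem 3.1: `Δ^{III} x = 0` on `U` iff `M` is minimal (`H ≡ 0`). -/
theorem stmt13 (U : Set Param) (x : Param → Vec3)
    (hU : IsOpen U) (hUconn : IsConnected U)
    (hx : ContDiffOn ℝ (⊤ : ℕ∞) x U) (himm : Immersed x U)
    (hpar : ∀ u ∈ U, (fformII x u).det ≠ 0) :
    (∀ u ∈ U, beltrami2 (fformIII x) x u = 0) ↔ (∀ u ∈ U, meanCurv x u = 0) := by
  have hP : ∀ u ∈ U, ∀ᶠ v in nhds u, Pt x v := fun u hu => by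
    filter_upwards [hU.mem_nhds hu] with v hv
    exact mkPt (hx.contDiffAt (hU.mem_nhds hv)) (himm v hv)
  constructor
  · intro h u hu
    exact fwd (hP u hu) (hpar u hu) (h u hu)
  · intro h u hu
    apply bwd
    filter_upwards [hU.mem_nhds hu] with v hv
    exact ⟨hP v hv, hpar v hv, h v hv⟩
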